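/- arXiv:2507.06294 — 2 statements merged into one kernel-verified Lean document; each statement's English description precedes it below -/
import Mathlib

section
/- Let n ≥ 2 be an integer and q a complex number with 0 < |q| < 1. Then ((q^{2n+1};q^{2n+1})_∞ / (q;q)_∞)^3 = 1 + Σ_{m=1}^∞ q^m Σ_{l=1}^{m} (f^n_{m,l}(q)/(q;q)_l) · Σ_{k=0}^{2l} [2l choose k]_q. -/
/-! The proof combines the Bailey chain with a conjugate Bailey pair built from the Rogers–Szegő
numbers `H_n = ∑_k [n choose k]_q`.

Writing `N_1 ≥ N_2 ≥ ⋯` for the partial sums of the indices `i_j`, the quotient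
`f^n_{m,l} / (q;q)_l` becomes the sum of
`q^{N_1² + N_2² + ⋯} / ((q;q)_{l-N_1} (q;q)_{N_1-N_2} ⋯)` over chains `l ≥ N_1 ≥ ⋯ ≥ N_n = 0` with
`N_1 + ⋯ + N_n = m - l` (`fpoly_eq_tsum`, `tsum_chainTerm`). Summing against `q^m` removes the last
constraint and gives `∑_l q^l H_{2l} β_l`, where `β` is the `n`-th step of the Bailey chain with
`a = q` started at the unit Bailey pair (`hasSum_chainSum`, `tsum_chain`).

The Bailey pair relation `β_l = ∑_r α_r / ((q;q)_{l-r} (q²;q)_{l+r})` has explicit `α_r`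
(`baileyBeta_eq`, by induction from a limiting `q`-Vandermonde sum). The conjugate pair is
`∑_j q^j (1 - q^{s+1}) H_{2j+s} / ((q;q)_j (q;q)_{j+s+1}) = (s+1) / (q;q)_∞^3` (`conjSum_eq`): by
telescoping, the left side satisfies the recurrence `F(s+2) = 2 F(s+1) - F(s)` with
`F(1) = 2 F(0)`, hence equals `(s+1) F(0)`, and `F(0) = lim F(s)/(s+1)` follows from
`H_n ~ n/(q;q)_∞` and Euler's sum. Together these give (`bailey_sum`)
`∑_l q^l H_{2l} β_l = (q;q)_∞^{-3} ∑_r (-1)^r (2r+1) q^{(2n+1) r(r+1)/2}`.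

For `n = 0` only `l = 0` contributes on the left, and the identity is Jacobi's series for
`(q;q)_∞^3` (`jacobi_cube`). Jacobi's series at `q^{2n+1}` then evaluates the right side for
general `n`. -/

open Finset

/-- Finite q-Pochhammer symbol `(a;q)_n`. -/
noncomputable def qPoch (a q : ℂ) (n : ℕ) : ℂ := ∏ j ∈ Finset.range n, (1 - a * q ^ j)

/-- Infinite q-Pochhammer symbol `(a;q)_∞`. -/
noncomputable def qPochInf (a q : ℂ) : ℂ := ∏' j : ℕ, (1 - a * q ^ j)

/-- `1/(q;q)_a` with the convention that it is `0` for `a < 0`. -/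
noncomputable def qFactInv (q : ℂ) (a : ℤ) : ℂ :=
  if 0 ≤ a then (qPoch q q a.toNat)⁻¹ else 0

/-- Gaussian binomial coefficient `[n choose k]_q`, zero unless `0 ≤ k ≤ n`. -/
noncomputable def qBinom (q : ℂ) (n k : ℤ) : ℂ :=
  if 0 ≤ k ∧ k ≤ n then qPoch q q n.toNat * qFactInv q k * qFactInv q (n - k) else 0

/-- The polynomial `f^k_{m,l}(q)`, a sum over nonnegative integers `i_3, …, i_k`
    (here `i ⟨j⟩` represents `i_{j+3}`), with
    `i_2 := m − l − Σ_{j=3}^{k} (j−1)i_j`, `i_1 := 2l + Σ_{j=3}^{k} (j−2)i_j − m`, of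
    `q^{Q(i_2,…,i_k)} (q;q)_l / ((q;q)_{i_k} ⋯ (q;q)_{i_3} (q;q)_{i_2} (q;q)_{i_1})`, where
    `Q(i_2,…,i_k) = i_k² + (i_k+i_{k−1})² + ⋯ + (i_k+⋯+i_2)²`. -/
noncomputable def fpoly (k : ℕ) (q : ℂ) (m l : ℤ) : ℂ :=
  ∑' i : Fin (k - 2) → ℕ,
    q ^ ((∑ t ∈ Finset.range (k - 2),
            (∑ j ∈ Finset.univ.filter (fun j : Fin (k - 2) => t ≤ j.val), (i j : ℤ)) ^ 2)
         + ((m - l - ∑ j, ((j.val : ℤ) + 2) * (i j : ℤ)) + ∑ j, (i j : ℤ)) ^ 2)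
    * qPoch q q l.toNat
    * (∏ j, qFactInv q (i j : ℤ))
    * qFactInv q (m - l - ∑ j, ((j.val : ℤ) + 2) * (i j : ℤ))
    * qFactInv q (2 * l + ∑ j, ((j.val : ℤ) + 1) * (i j : ℤ) - m)

open Filter Topology

/-! ### Reciprocals of `(q;q)_k` and the Rogers–Szegő numbers -/

/-- `1/(q;q)_k` for a natural number `k`. -/
noncomputable def invPoch (q : ℂ) (k : ℕ) : ℂ := (qPoch q q k)⁻¹

/-- The Rogers–Szegő polynomial `∑_k [n choose k]_q z^k` at `z = 1`. -/
noncomputable def rogersSzego (q : ℂ) (n : ℕ) : ℂ :=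
  qPoch q q n * ∑ p ∈ antidiagonal n, invPoch q p.1 * invPoch q p.2

lemma one_sub_pow_ne_zero {q : ℂ} (hq1 : ‖q‖ < 1) (k : ℕ) : 1 - q ^ (k + 1) ≠ 0 := by
  intro h
  have h1 : q ^ (k + 1) = 1 := (sub_eq_zero.mp h).symm
  have h2 : ‖q‖ ^ (k + 1) = 1 := by rw [← norm_pow, h1, norm_one]
  have h3 := pow_lt_one₀ (norm_nonneg q) hq1 (Nat.succ_ne_zero k)
  exact h3.ne h2

lemma qPoch_zero' (q : ℂ) : qPoch q q 0 = 1 := by simp [qPoch]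

lemma qPoch_succ' (q : ℂ) (k : ℕ) : qPoch q q (k + 1) = qPoch q q k * (1 - q ^ (k + 1)) := by
  rw [qPoch, prod_range_succ, ← qPoch, pow_succ' q k]

lemma qPoch_ne_zero {q : ℂ} (hq1 : ‖q‖ < 1) (k : ℕ) : qPoch q q k ≠ 0 := by
  induction k with
  | zero => simp [qPoch_zero']
  | succ k ih => rw [qPoch_succ']; exact mul_ne_zero ih (one_sub_pow_ne_zero hq1 k)

lemma invPoch_zero (q : ℂ) : invPoch q 0 = 1 := by simp [invPoch, qPoch_zero']

lemma invPoch_succ {q : ℂ} (hq1 : ‖q‖ < 1) (k : ℕ) :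
    (1 - q ^ (k + 1)) * invPoch q (k + 1) = invPoch q k := by
  have := one_sub_pow_ne_zero hq1 k
  have := qPoch_ne_zero hq1 k
  rw [invPoch, invPoch, qPoch_succ']
  field_simp

lemma rogersSzego_zero (q : ℂ) : rogersSzego q 0 = 1 := by
  simp [rogersSzego, invPoch_zero, qPoch_zero']

lemma rogersSzego_one {q : ℂ} (hq1 : ‖q‖ < 1) : rogersSzego q 1 = 2 := by
  have h1 := invPoch_succ hq1 0
  have h := one_sub_pow_ne_zero hq1 0
  have e : antidiagonal 1 = {(0, 1), (1, 0)} := rfl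
  rw [rogersSzego, e, sum_pair (by decide)]
  simp only [invPoch_zero, qPoch_succ', qPoch_zero', zero_add, pow_one] at *
  linear_combination 2 * h1

/-- The three-term recurrence, read off from `U(qx) = (1 - x) U(x)`, squared, where
`U(x) = ∑ x^k / (q;q)_k`. -/
lemma rogersSzego_rec {q : ℂ} (hq1 : ‖q‖ < 1) (n : ℕ) :
    rogersSzego q (n + 2) = 2 * rogersSzego q (n + 1) - (1 - q ^ (n + 1)) * rogersSzego q n := by
  let U : PowerSeries ℂ := PowerSeries.mk (invPoch q)
  have hU : PowerSeries.rescale q U = U - PowerSeries.X * U := by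
    ext k
    rw [PowerSeries.coeff_rescale, map_sub]
    cases k with
    | zero => simp [U]
    | succ k =>
      rw [PowerSeries.coeff_succ_X_mul]
      simp only [U, PowerSeries.coeff_mk]
      linear_combination -invPoch_succ hq1 k
  have hU2 : PowerSeries.rescale q (U * U)
      = U * U - 2 * (PowerSeries.X * (U * U)) + PowerSeries.X * (PowerSeries.X * (U * U)) := by
    rw [map_mul, hU]; ring
  have hc : ∀ k, PowerSeries.coeff k (U * U)
      = ∑ p ∈ antidiagonal k, invPoch q p.1 * invPoch q p.2 := by
    intro k; rw [PowerSeries.coeff_mul]; simp [U]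
  have h := congrArg (PowerSeries.coeff (n + 2)) hU2
  have h2 : (2 : PowerSeries ℂ) = PowerSeries.C 2 := (map_ofNat _ 2).symm
  rw [PowerSeries.coeff_rescale, map_add, map_sub, h2, PowerSeries.coeff_C_mul,
    PowerSeries.coeff_succ_X_mul, PowerSeries.coeff_succ_X_mul, PowerSeries.coeff_succ_X_mul,
    hc, hc, hc] at h
  simp only [rogersSzego, qPoch_succ']
  linear_combination (-(qPoch q q n) * (1 - q ^ (n + 1))) * h

lemma sum_qBinom (q : ℂ) (n : ℕ) :
    ∑ k ∈ range (n + 1), qBinom q (n : ℤ) (k : ℤ) = rogersSzego q n := by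
  rw [rogersSzego, Nat.sum_antidiagonal_eq_sum_range_succ
    (fun a b => invPoch q a * invPoch q b), mul_sum]
  refine sum_congr rfl fun k hk => ?_
  have hk' : k ≤ n := by simpa [Nat.lt_succ_iff] using hk
  have e : ((n : ℤ) - (k : ℤ)) = ((n - k : ℕ) : ℤ) := by omega
  rw [qBinom, if_pos (by omega), e]
  simp [qFactInv, invPoch, mul_assoc]

/-! ### The Bailey chain of the unit pair -/

/-- A limiting case of the `q`-Vandermonde sum. -/
lemma sum_durfee {q : ℂ} (hq1 : ‖q‖ < 1) (M : ℕ) : ∀ a : ℕ,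
    ∑ t ∈ range (M + 1), q ^ (t * (t + a)) * invPoch q (M - t) * invPoch q t * invPoch q (a + t)
      = invPoch q M * invPoch q (M + a) := by
  induction M with
  | zero => intro a; simp [invPoch_zero]
  | succ M ih =>
    intro a
    have key : (1 - q ^ (M + 1)) * ∑ t ∈ range (M + 1 + 1),
        q ^ (t * (t + a)) * invPoch q (M + 1 - t) * invPoch q t * invPoch q (a + t)
        = ∑ t ∈ range (M + 1),
            q ^ (t * (t + a)) * invPoch q (M - t) * invPoch q t * invPoch q (a + t)
          + q ^ (a + M + 1) * ∑ t ∈ range (M + 1),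
            q ^ (t * (t + (a + 1))) * invPoch q (M - t) * invPoch q t
              * invPoch q (a + 1 + t) := by
      -- split `1 - q^(M+1) = (1 - q^(M+1-t)) + q^(M+1-t) (1 - q^t)`
      have e : (1 - q ^ (M + 1)) * ∑ t ∈ range (M + 1 + 1),
          q ^ (t * (t + a)) * invPoch q (M + 1 - t) * invPoch q t * invPoch q (a + t)
          = ∑ t ∈ range (M + 1 + 1), q ^ (t * (t + a)) *
              ((1 - q ^ (M + 1 - t)) * invPoch q (M + 1 - t)) * invPoch q t * invPoch q (a + t)
            + ∑ t ∈ range (M + 1 + 1), q ^ (t * (t + a)) * q ^ (M + 1 - t) *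
              invPoch q (M + 1 - t) * ((1 - q ^ t) * invPoch q t) * invPoch q (a + t) := by
        rw [mul_sum, ← sum_add_distrib]
        refine sum_congr rfl fun t ht => ?_
        have ht' : t ≤ M + 1 := by simpa [Nat.lt_succ_iff] using ht
        have : q ^ (M + 1) = q ^ (M + 1 - t) * q ^ t := by
          rw [← pow_add]; congr 1; omega
        rw [this]; ring
      rw [e, sum_range_succ, sum_range_succ' _ (M + 1)]
      simp only [Nat.sub_self, pow_zero, sub_self, zero_mul, mul_zero, add_zero]
      congr 1
      · refine sum_congr rfl fun t ht => ?_
        have ht' : t ≤ M := by simpa [Nat.lt_succ_iff] using ht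
        have : M + 1 - t = (M - t) + 1 := by omega
        rw [this, invPoch_succ hq1]
      · rw [mul_sum]
        refine sum_congr rfl fun t ht => ?_
        have ht' : t ≤ M := by simpa [Nat.lt_succ_iff] using ht
        have e1 : M + 1 - (t + 1) = M - t := by omega
        have e2 : a + (t + 1) = a + 1 + t := by omega
        have e3 : q ^ ((t + 1) * (t + 1 + a)) * q ^ (M - t)
            = q ^ (a + M + 1) * q ^ (t * (t + (a + 1))) := by
          rw [← pow_add, ← pow_add]; congr 1
          obtain ⟨s, rfl⟩ := Nat.exists_eq_add_of_le ht'
          rw [Nat.add_sub_cancel_left]; ring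
        rw [e1, e2, invPoch_succ hq1, e3]; ring
    rw [ih, ih] at key
    have h0 := one_sub_pow_ne_zero hq1 M
    apply mul_left_cancel₀ h0
    rw [key]
    have e1 := invPoch_succ hq1 M
    have e2 := invPoch_succ hq1 (M + a)
    have e3 : M + (a + 1) = M + a + 1 := by ring
    have e4 : M + 1 + a = M + a + 1 := by ring
    have e5 : a + M + 1 = M + a + 1 := by ring
    rw [e3, e4, e5]
    linear_combination (-invPoch q M) * e2 - invPoch q (M + a + 1) * e1

/-- The sequence `β_L` after `n` steps of the Bailey chain (`a = q`) started at the unit pair. -/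
noncomputable def baileyBeta (q : ℂ) : ℕ → ℕ → ℂ
  | 0, L => if L = 0 then 1 else 0
  | n + 1, L => ∑ N ∈ range (L + 1), q ^ (N ^ 2 + N) * invPoch q (L - N) * baileyBeta q n N

/-- `(1 - q) α_r` after `n` steps of the Bailey chain (`a = q`) started at the unit pair. -/
noncomputable def baileyAlpha (q : ℂ) (n r : ℕ) : ℂ :=
  (-1) ^ r * q ^ (r.choose 2) * q ^ (n * (r ^ 2 + r)) * (1 - q ^ (2 * r + 1))

/-- The Bailey pair relation `β_L = ∑_r α_r / ((q;q)_{L-r} (q²;q)_{L+r})`. -/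
lemma baileyBeta_eq {q : ℂ} (hq1 : ‖q‖ < 1) (n : ℕ) : ∀ L : ℕ,
    baileyBeta q n L
      = ∑ r ∈ range (L + 1), baileyAlpha q n r * invPoch q (L - r) * invPoch q (L + r + 1) := by
  induction n with
  | zero =>
    intro L
    rcases L with _ | L
    · have := invPoch_succ hq1 0
      simp [baileyBeta, baileyAlpha, invPoch_zero] at *
      exact this.symm
    · rw [baileyBeta, if_neg (Nat.succ_ne_zero L)]
      have h0 := one_sub_pow_ne_zero hq1 L
      symm
      apply mul_left_cancel₀ h0
      rw [mul_zero, mul_sum]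
      -- the terms telescope
      have part : ∀ R ≤ L + 1, ∑ r ∈ range R, (1 - q ^ (L + 1)) *
          (baileyAlpha q 0 r * invPoch q (L + 1 - r) * invPoch q (L + 1 + r + 1))
          = -((-1) ^ R * q ^ (R.choose 2) * (1 - q ^ R) * invPoch q (L + 1 - R)
              * invPoch q (L + 1 + R)) := by
        intro R
        induction R with
        | zero => intro _; simp
        | succ R ihR =>
          intro hR
          rw [sum_range_succ, ihR (by omega)]
          obtain ⟨s, rfl⟩ : ∃ s, L = R + s := ⟨L - R, by omega⟩
          have e1 : R + s + 1 - R = s + 1 := by omega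
          have e2 : R + s + 1 - (R + 1) = s := by omega
          have e3 : R + s + 1 + (R + 1) = R + s + 1 + R + 1 := by omega
          have e4 : (R + 1).choose 2 = R.choose 2 + R := by
            rw [Nat.choose_succ_succ' R 1, Nat.choose_one_right, add_comm]
          rw [e1, e2, e3, e4, baileyAlpha, ← invPoch_succ hq1 s,
            ← invPoch_succ hq1 (R + s + 1 + R)]
          ring
      rw [sum_range_succ, part (L + 1) le_rfl, baileyAlpha]
      have h1 := invPoch_succ hq1 (L + 1 + (L + 1))
      rw [← h1]
      simp only [Nat.sub_self]
      ring
  | succ n ih =>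
    intro L
    simp only [baileyBeta, ih, mul_sum]
    rw [sum_comm' (t' := range (L + 1)) (s' := fun r => Ico r (L + 1))
      (by intro x y; simp only [mem_range, mem_Ico]; omega)]
    refine sum_congr rfl fun r hr => ?_
    have hr' : r ≤ L := by simpa [Nat.lt_succ_iff] using hr
    obtain ⟨M, rfl⟩ := Nat.exists_eq_add_of_le hr'
    have e1 : r + M + 1 - r = M + 1 := by omega
    have e2 : r + M - r = M := by omega
    have e3 : r + M + r + 1 = M + (2 * r + 1) := by omega
    rw [sum_Ico_eq_sum_range, e1, e2, e3, mul_assoc, ← sum_durfee hq1, mul_sum]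
    refine sum_congr rfl fun t ht => ?_
    have e4 : r + M - (r + t) = M - t := by omega
    have e5 : r + t - r = t := by omega
    have e6 : r + t + r + 1 = 2 * r + 1 + t := by omega
    rw [e4, e5, e6, baileyAlpha, baileyAlpha]
    ring

/-! ### Analytic estimates -/

lemma qPochInf_ne_zero {q : ℂ} (hq1 : ‖q‖ < 1) : qPochInf q q ≠ 0 := by
  have e : qPochInf q q = ∏' j : ℕ, (1 + -(q ^ (j + 1))) := by
    simp only [qPochInf, pow_succ', sub_eq_add_neg]
  rw [e]
  refine tprod_one_add_ne_zero_of_summable (fun i => ?_) ?_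
  · rw [← sub_eq_add_neg]; exact one_sub_pow_ne_zero hq1 i
  · simp only [norm_neg, norm_pow]
    exact (summable_nat_add_iff 1).mpr (summable_geometric_of_lt_one (norm_nonneg q) hq1)

lemma tendsto_qPoch {q : ℂ} (hq1 : ‖q‖ < 1) :
    Tendsto (qPoch q q) atTop (𝓝 (qPochInf q q)) := by
  have h : Multipliable fun j : ℕ => (1 + -(q * q ^ j)) := by
    refine multipliable_one_add_of_summable ?_
    simp only [norm_neg, norm_pow, norm_mul]
    exact (summable_geometric_of_lt_one (norm_nonneg q) hq1).mul_left _
  simp only [← sub_eq_add_neg] at h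
  exact h.hasProd.tendsto_prod_nat

lemma tendsto_invPoch {q : ℂ} (hq1 : ‖q‖ < 1) :
    Tendsto (invPoch q) atTop (𝓝 (qPochInf q q)⁻¹) :=
  (tendsto_qPoch hq1).inv₀ (qPochInf_ne_zero hq1)

lemma exists_bounds {q : ℂ} (hq1 : ‖q‖ < 1) : ∃ B : ℝ, 1 ≤ B ∧ (∀ k, ‖invPoch q k‖ ≤ B) ∧
    ∀ n : ℕ, ‖rogersSzego q n‖ ≤ B * ((n : ℝ) + 1) := by
  obtain ⟨B₁, hB₁⟩ := (Metric.isBounded_range_of_tendsto _ (tendsto_invPoch hq1)).exists_norm_le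
  obtain ⟨B₂, hB₂⟩ := (Metric.isBounded_range_of_tendsto _ (tendsto_qPoch hq1)).exists_norm_le
  have h1 : ∀ k, ‖invPoch q k‖ ≤ B₁ := fun k => hB₁ _ ⟨k, rfl⟩
  have h2 : ∀ k, ‖qPoch q q k‖ ≤ B₂ := fun k => hB₂ _ ⟨k, rfl⟩
  have p1 : 1 ≤ B₁ := by simpa [invPoch_zero] using h1 0
  have p2 : 1 ≤ B₂ := by simpa [qPoch_zero'] using h2 0
  refine ⟨B₂ * B₁ ^ 2, by nlinarith, fun k => (h1 k).trans (by nlinarith), fun n => ?_⟩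
  rw [rogersSzego, norm_mul, mul_assoc]
  refine mul_le_mul (h2 n) ?_ (norm_nonneg _) (by linarith)
  refine (norm_sum_le_of_le (f := fun p : ℕ × ℕ => invPoch q p.1 * invPoch q p.2)
    (n := fun _ => B₁ ^ 2) _ fun p _ => ?_).trans ?_
  · rw [norm_mul, sq]
    exact mul_le_mul (h1 _) (h1 _) (norm_nonneg _) (by linarith)
  · rw [sum_const, Nat.card_antidiagonal, nsmul_eq_mul]
    push_cast
    exact (mul_comm _ _).le

lemma summable_poly_geom {q : ℂ} (hq0 : 0 < ‖q‖) (hq1 : ‖q‖ < 1) (k : ℕ) :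
    Summable fun j : ℕ => ((j : ℝ) + 1) ^ k * ‖q‖ ^ j := by
  have h := summable_pow_mul_geometric_of_norm_lt_one (R := ℝ) k (r := ‖q‖) (by simpa using hq1)
  have h2 := ((summable_nat_add_iff 1).mpr h).mul_right (‖q‖⁻¹)
  refine h2.congr fun j => ?_
  push_cast
  rw [pow_succ, mul_assoc, mul_assoc, mul_inv_cancel₀ hq0.ne', mul_one]

lemma bound_arith {B : ℝ} (hB : 1 ≤ B) (j s : ℕ) :
    B * (((2 * j + s : ℕ) : ℝ) + 1) ≤ 2 * B * ((s : ℝ) + 1) * ((j : ℝ) + 1) := by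
  push_cast
  have hs : (0 : ℝ) ≤ s := Nat.cast_nonneg s
  have hj : (0 : ℝ) ≤ j := Nat.cast_nonneg j
  nlinarith [mul_nonneg hs hj, mul_nonneg (by linarith : (0:ℝ) ≤ B) (mul_nonneg hs hj),
    mul_nonneg (by linarith : (0:ℝ) ≤ B) hs]

lemma norm_one_sub_pow_le {q : ℂ} (hq1 : ‖q‖ < 1) (k : ℕ) : ‖1 - q ^ k‖ ≤ 2 := by
  refine (norm_sub_le _ _).trans ?_
  rw [norm_one, norm_pow]
  linarith [pow_le_one₀ (n := k) (norm_nonneg q) hq1.le]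

/-! ### A conjugate Bailey pair -/

/-- The summand of `∑_j q^j (1 - q^(s+1)) H_{2j+s} / ((q;q)_j (q;q)_{j+s+1})`. -/
noncomputable def conjTerm (q : ℂ) (s j : ℕ) : ℂ :=
  q ^ j * rogersSzego q (2 * j + s) * invPoch q j * invPoch q (j + s + 1) * (1 - q ^ (s + 1))

/-- Partial sums of the divergent series `∑_j H_{2j+s} / ((q;q)_j (q;q)_{j+s})`. -/
noncomputable def partX (q : ℂ) (s J : ℕ) : ℂ :=
  ∑ j ∈ range J, rogersSzego q (2 * j + s) * invPoch q j * invPoch q (j + s)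

/-- The boundary term in the second difference of `partX`. -/
noncomputable def bdry (q : ℂ) (s J : ℕ) : ℂ :=
  q ^ J * rogersSzego q (2 * J + s) * invPoch q J * invPoch q (J + s + 1)
    * (q ^ (s + 1) * (1 - q ^ J))

lemma partX_rec {q : ℂ} (hq1 : ‖q‖ < 1) (s J : ℕ) :
    2 * partX q (s + 1) J = partX q (s + 2) J + partX q s J - bdry q s J := by
  induction J with
  | zero => simp [partX, bdry]
  | succ J ih =>
    have hb : bdry q s (J + 1) = bdry q s J
        + rogersSzego q (2 * J + (s + 2)) * invPoch q J * invPoch q (J + (s + 2))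
        + rogersSzego q (2 * J + s) * invPoch q J * invPoch q (J + s)
        - 2 * (rogersSzego q (2 * J + (s + 1)) * invPoch q J * invPoch q (J + (s + 1))) := by
      have e1 : 2 * (J + 1) + s = 2 * J + s + 2 := by ring
      have e2 : 2 * J + (s + 2) = 2 * J + s + 2 := by ring
      have e3 : 2 * J + (s + 1) = 2 * J + s + 1 := by ring
      have e4 : J + 1 + s + 1 = J + s + 1 + 1 := by ring
      have e5 : J + (s + 2) = J + s + 1 + 1 := by ring
      have e6 : J + (s + 1) = J + s + 1 := by ring
      rw [bdry, bdry, e1, e2, e3, e4, e5, e6, rogersSzego_rec hq1,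
        ← invPoch_succ hq1 J, ← invPoch_succ hq1 (J + s), ← invPoch_succ hq1 (J + s + 1)]
      ring
    simp only [partX, sum_range_succ] at ih ⊢
    linear_combination ih + hb

/-- The analogue of `partX_rec` at `s = -1`, where the two outer series coincide. -/
lemma partX_zero {q : ℂ} (hq1 : ‖q‖ < 1) (J : ℕ) :
    2 * partX q 0 (J + 1) = 2 * partX q 1 (J + 1)
      - (1 - q ^ (2 * J + 2)) * rogersSzego q (2 * J + 1) * invPoch q (J + 1) ^ 2 := by
  induction J with
  | zero =>
    have h := invPoch_succ hq1 0
    simp only [zero_add, pow_one, invPoch_zero] at h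
    simp only [partX, zero_add, range_one, sum_singleton, mul_zero, rogersSzego_zero,
      rogersSzego_one hq1, invPoch_zero, add_zero, mul_one]
    linear_combination (-2 + 2 * (1 + q) * invPoch q 1) * h
  | succ J ih =>
    rw [partX, partX, sum_range_succ, sum_range_succ _ (J + 1), ← partX, ← partX, mul_add, ih]
    have e1 : 2 * (J + 1) + 1 = 2 * J + 1 + 2 := by ring
    have e2 : 2 * (J + 1) + 0 = 2 * J + 2 := by ring
    rw [e1, e2, add_zero, rogersSzego_rec hq1 (2 * J + 1), ← invPoch_succ hq1 (J + 1)]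
    ring

/-- Splitting `q^j (1 - q^(s+1)) = (1 - q^(j+s+1)) - (1 - q^j)` writes the convergent sum as a
difference of two divergent ones. -/
lemma sum_conjTerm {q : ℂ} (hq1 : ‖q‖ < 1) (s J : ℕ) :
    ∑ j ∈ range (J + 1), conjTerm q s j = partX q s (J + 1) - partX q (s + 2) J := by
  induction J with
  | zero =>
    simp only [partX, zero_add, range_one, sum_singleton, conjTerm, mul_zero, range_zero, sum_empty,
      ← invPoch_succ hq1 s, pow_zero]
    ring
  | succ J ih =>
    have hx : partX q s (J + 1 + 1) = partX q s (J + 1)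
        + rogersSzego q (2 * (J + 1) + s) * invPoch q (J + 1) * invPoch q (J + 1 + s) := by
      rw [partX, sum_range_succ, ← partX]
    have hy : partX q (s + 2) (J + 1) = partX q (s + 2) J
        + rogersSzego q (2 * J + (s + 2)) * invPoch q J * invPoch q (J + (s + 2)) := by
      rw [partX, sum_range_succ, ← partX]
    rw [sum_range_succ, ih, hx, hy, conjTerm]
    have e1 : 2 * (J + 1) + s = 2 * J + s + 2 := by ring
    have e2 : 2 * J + (s + 2) = 2 * J + s + 2 := by ring
    have e3 : J + 1 + s + 1 = J + s + 1 + 1 := by ring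
    have e4 : J + (s + 2) = J + s + 1 + 1 := by ring
    have e5 : J + 1 + s = J + s + 1 := by ring
    rw [e1, e2, e3, e4, e5, ← invPoch_succ hq1 J, ← invPoch_succ hq1 (J + s + 1)]
    ring

lemma conj_bound {q : ℂ} {B : ℝ} (hB : 1 ≤ B) (hu : ∀ k, ‖invPoch q k‖ ≤ B)
    (hH : ∀ n : ℕ, ‖rogersSzego q n‖ ≤ B * ((n : ℝ) + 1)) (s j a b : ℕ) {c : ℂ} (hc : ‖c‖ ≤ 2) :
    ‖q ^ j * rogersSzego q (2 * j + s) * invPoch q a * invPoch q b * c‖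
      ≤ (4 * B ^ 3 * ((s : ℝ) + 1)) * (((j : ℝ) + 1) ^ 1 * ‖q‖ ^ j) := by
  have h1 := (hH (2 * j + s)).trans (bound_arith hB j s)
  rw [norm_mul, norm_mul, norm_mul, norm_mul, norm_pow]
  have h0 : (0:ℝ) ≤ B := by linarith
  calc ‖q‖ ^ j * ‖rogersSzego q (2 * j + s)‖ * ‖invPoch q a‖ * ‖invPoch q b‖ * ‖c‖
      ≤ ‖q‖ ^ j * (2 * B * ((s : ℝ) + 1) * ((j : ℝ) + 1)) * B * B * 2 := by
        have := hu a
        have := hu b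
        gcongr
    _ = _ := by ring

lemma summable_conjTerm {q : ℂ} (hq0 : 0 < ‖q‖) (hq1 : ‖q‖ < 1) (s : ℕ) :
    Summable (conjTerm q s) := by
  obtain ⟨B, hB, hu, hH⟩ := exists_bounds hq1
  exact Summable.of_norm_bounded ((summable_poly_geom hq0 hq1 1).mul_left _)
    fun j => conj_bound hB hu hH s j j (j + s + 1) (norm_one_sub_pow_le hq1 _)

lemma tendsto_bdry {q : ℂ} (hq0 : 0 < ‖q‖) (hq1 : ‖q‖ < 1) (s : ℕ) :
    Tendsto (bdry q s) atTop (𝓝 0) := by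
  obtain ⟨B, hB, hu, hH⟩ := exists_bounds hq1
  refine Summable.tendsto_atTop_zero (Summable.of_norm_bounded
    ((summable_poly_geom hq0 hq1 1).mul_left _)
    fun j => conj_bound hB hu hH s j j (j + s + 1) ?_)
  rw [norm_mul, norm_pow]
  have := pow_le_one₀ (n := s + 1) (norm_nonneg q) hq1.le
  have := norm_one_sub_pow_le hq1 j
  nlinarith [norm_nonneg (1 - q ^ j)]

lemma tendsto_sum_conjTerm {q : ℂ} (hq0 : 0 < ‖q‖) (hq1 : ‖q‖ < 1) (s : ℕ) :
    Tendsto (fun J => ∑ j ∈ range (J + 1), conjTerm q s j) atTop (𝓝 (∑' j, conjTerm q s j)) :=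
  (tendsto_add_atTop_iff_nat 1).mpr (summable_conjTerm hq0 hq1 s).hasSum.tendsto_sum_nat

lemma conjSum_rec {q : ℂ} (hq0 : 0 < ‖q‖) (hq1 : ‖q‖ < 1) (s : ℕ) :
    ∑' j, conjTerm q (s + 2) j
      = 2 * ∑' j, conjTerm q (s + 1) j - ∑' j, conjTerm q s j := by
  have h1 := ((tendsto_sum_conjTerm hq0 hq1 (s + 2)).add (tendsto_sum_conjTerm hq0 hq1 s)).sub
    ((tendsto_sum_conjTerm hq0 hq1 (s + 1)).const_mul 2)
  have h2 := ((tendsto_add_atTop_iff_nat 1).mpr (tendsto_bdry hq0 hq1 s)).sub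
    (tendsto_bdry hq0 hq1 (s + 2))
  have e := tendsto_nhds_unique (h1.congr fun J => ?_) h2
  · linear_combination e
  · rw [sum_conjTerm hq1, sum_conjTerm hq1, sum_conjTerm hq1]
    linear_combination -partX_rec hq1 s (J + 1) + partX_rec hq1 (s + 2) J

lemma conjSum_one {q : ℂ} (hq0 : 0 < ‖q‖) (hq1 : ‖q‖ < 1) :
    ∑' j, conjTerm q 1 j = 2 * ∑' j, conjTerm q 0 j := by
  obtain ⟨B, hB, hu, hH⟩ := exists_bounds hq1
  have h1 := (tendsto_sum_conjTerm hq0 hq1 1).sub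
    ((tendsto_sum_conjTerm hq0 hq1 0).const_mul 2)
  have h2 : Tendsto (fun J => q ^ J * rogersSzego q (2 * J + 1) * invPoch q (J + 1)
      * invPoch q (J + 1) * (q * (1 - q ^ (J + 1)))) atTop (𝓝 0) := by
    refine Summable.tendsto_atTop_zero (Summable.of_norm_bounded
      ((summable_poly_geom hq0 hq1 1).mul_left _)
      fun j => conj_bound hB hu hH 1 j (j + 1) (j + 1) ?_)
    rw [norm_mul]
    have := norm_one_sub_pow_le hq1 (j + 1)
    nlinarith [norm_nonneg (1 - q ^ (j + 1))]
  have h3 := h2.sub (tendsto_bdry hq0 hq1 1)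
  have e := tendsto_nhds_unique (h1.congr fun J => ?_) h3
  · linear_combination e
  · rw [sum_conjTerm hq1, sum_conjTerm hq1]
    have hx : partX q 1 (J + 1) = partX q 1 J
        + rogersSzego q (2 * J + 1) * invPoch q J * invPoch q (J + 1) := by
      rw [partX, sum_range_succ, ← partX]
    have hr := partX_rec hq1 1 J
    have hz := partX_zero hq1 J
    rw [← invPoch_succ hq1 J] at hx
    simp only [zero_add, Nat.reduceAdd] at hr ⊢
    linear_combination hr - hz - hx

lemma conjSum_eq_mul {q : ℂ} (hq0 : 0 < ‖q‖) (hq1 : ‖q‖ < 1) (s : ℕ) :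
    ∑' j, conjTerm q s j = ((s : ℂ) + 1) * ∑' j, conjTerm q 0 j := by
  induction s using Nat.twoStepInduction with
  | zero => simp
  | one => rw [conjSum_one hq0 hq1]; push_cast; ring
  | more s ih0 ih1 =>
    rw [conjSum_rec hq0 hq1, ih0, ih1]; push_cast; ring

/-- The average of `1/((q;q)_k (q;q)_{n-k})` over `0 ≤ k ≤ n` tends to `1/(q;q)_∞²`, so the
Rogers–Szegő numbers grow like `(n+1)/(q;q)_∞`. -/
lemma tendsto_rogersSzego_div {q : ℂ} (hq1 : ‖q‖ < 1) :
    Tendsto (fun n : ℕ => rogersSzego q n / ((n : ℂ) + 1)) atTop (𝓝 (qPochInf q q)⁻¹) := by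
  obtain ⟨B, hB, hu, -⟩ := exists_bounds hq1
  set U := (qPochInf q q)⁻¹ with hU
  have hUB : ‖U‖ ≤ B := le_of_tendsto (tendsto_invPoch hq1).norm (Eventually.of_forall hu)
  have h0 : Tendsto (fun k => ‖invPoch q k - U‖) atTop (𝓝 0) := by
    simpa [hU] using ((tendsto_invPoch hq1).sub_const U).norm
  have hces := ((tendsto_add_atTop_iff_nat 1).mpr h0.cesaro).const_mul (2 * B)
  rw [mul_zero] at hces
  have havg : Tendsto (fun n : ℕ => (∑ p ∈ antidiagonal n, invPoch q p.1 * invPoch q p.2)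
      / ((n : ℂ) + 1)) atTop (𝓝 (U ^ 2)) := by
    rw [tendsto_iff_norm_sub_tendsto_zero]
    refine squeeze_zero (fun _ => norm_nonneg _) (fun n => ?_) hces
    have hn : ((n : ℂ) + 1) ≠ 0 := Nat.cast_add_one_ne_zero n
    have e1 : (∑ p ∈ antidiagonal n, invPoch q p.1 * invPoch q p.2) / ((n : ℂ) + 1) - U ^ 2
        = ((n : ℂ) + 1)⁻¹ * ∑ p ∈ antidiagonal n, (invPoch q p.1 * invPoch q p.2 - U ^ 2) := by
      rw [sum_sub_distrib, sum_const, Nat.card_antidiagonal, nsmul_eq_mul]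
      push_cast
      field_simp
    have e2 : ‖((n : ℂ) + 1)⁻¹‖ = (((n + 1 : ℕ) : ℝ))⁻¹ := by
      rw [norm_inv]
      congr 1
      exact_mod_cast Complex.norm_natCast (n + 1)
    rw [e1, norm_mul, e2, mul_left_comm]
    refine mul_le_mul_of_nonneg_left ?_ (by positivity)
    calc ‖∑ p ∈ antidiagonal n, (invPoch q p.1 * invPoch q p.2 - U ^ 2)‖
        ≤ ∑ p ∈ antidiagonal n, (B * ‖invPoch q p.1 - U‖ + B * ‖invPoch q p.2 - U‖) := by
          refine norm_sum_le_of_le _ fun p _ => ?_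
          have : invPoch q p.1 * invPoch q p.2 - U ^ 2
              = invPoch q p.2 * (invPoch q p.1 - U) + U * (invPoch q p.2 - U) := by ring
          rw [this]
          refine (norm_add_le _ _).trans ?_
          rw [norm_mul, norm_mul]
          have := hu p.2
          gcongr
      _ = 2 * B * ∑ k ∈ range (n + 1), ‖invPoch q k - U‖ := by
          rw [sum_add_distrib, ← mul_sum, ← mul_sum]
          have s1 : ∑ p ∈ antidiagonal n, ‖invPoch q p.1 - U‖
              = ∑ k ∈ range (n + 1), ‖invPoch q k - U‖ :=
            Nat.sum_antidiagonal_eq_sum_range_succ (fun a _ => ‖invPoch q a - U‖) n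
          have s2 : ∑ p ∈ antidiagonal n, ‖invPoch q p.2 - U‖
              = ∑ p ∈ antidiagonal n, ‖invPoch q p.1 - U‖ :=
            Nat.sum_antidiagonal_swap (f := fun p : ℕ × ℕ => ‖invPoch q p.1 - U‖)
          rw [s2, s1]; ring
  have h := (tendsto_qPoch hq1).mul havg
  have hP := qPochInf_ne_zero hq1
  have e : qPochInf q q * U ^ 2 = U := by rw [hU]; field_simp
  rw [e] at h
  refine h.congr fun n => ?_
  rw [rogersSzego, mul_div_assoc]

/-- Euler's sum `∑ q^j/(q;q)_j = 1/(q;q)_∞`. -/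
lemma hasSum_euler {q : ℂ} (hq0 : 0 < ‖q‖) (hq1 : ‖q‖ < 1) :
    HasSum (fun j => q ^ j * invPoch q j) (qPochInf q q)⁻¹ := by
  obtain ⟨B, hB, hu, -⟩ := exists_bounds hq1
  have hs : Summable (fun j => q ^ j * invPoch q j) := by
    refine Summable.of_norm_bounded ((summable_poly_geom hq0 hq1 0).mul_left B) fun j => ?_
    rw [norm_mul, norm_pow, pow_zero, one_mul, mul_comm]
    have := hu j
    gcongr
  have hp : ∀ J, ∑ j ∈ range (J + 1), q ^ j * invPoch q j = invPoch q J := by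
    intro J
    induction J with
    | zero => simp [invPoch_zero]
    | succ J ih => rw [sum_range_succ, ih, ← invPoch_succ hq1 J]; ring
  have h1 := (tendsto_add_atTop_iff_nat 1).mpr hs.hasSum.tendsto_sum_nat
  have h2 := tendsto_nhds_unique (h1.congr hp) (tendsto_invPoch hq1)
  exact h2 ▸ hs.hasSum

/-- The conjugate Bailey pair. The constant comes from `s → ∞` in `(∑_j conjTerm q s j)/(s+1)`,
which does not depend on `s`. -/
lemma conjSum_eq {q : ℂ} (hq0 : 0 < ‖q‖) (hq1 : ‖q‖ < 1) (s : ℕ) :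
    ∑' j, conjTerm q s j = ((s : ℂ) + 1) * ((qPochInf q q)⁻¹) ^ 3 := by
  rw [conjSum_eq_mul hq0 hq1]
  congr 1
  obtain ⟨B, hB, hu, hH⟩ := exists_bounds hq1
  set U := (qPochInf q q)⁻¹ with hU
  have hlim : Tendsto (fun s : ℕ => ∑' j, conjTerm q s j / ((s : ℂ) + 1)) atTop
      (𝓝 (∑' j : ℕ, U ^ 2 * (q ^ j * invPoch q j))) := by
    refine tendsto_tsum_of_dominated_convergence
      ((summable_poly_geom hq0 hq1 1).mul_left (4 * B ^ 3)) (fun j => ?_)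
      (Eventually.of_forall fun s j => ?_)
    · have t1 : Tendsto (fun s : ℕ => rogersSzego q (s + 2 * j) / (((s + 2 * j : ℕ) : ℂ) + 1))
          atTop (𝓝 U) := (tendsto_add_atTop_iff_nat (2 * j)).mpr (tendsto_rogersSzego_div hq1)
      have t2 : Tendsto (fun s : ℕ => invPoch q (s + (j + 1))) atTop (𝓝 U) :=
        (tendsto_add_atTop_iff_nat (j + 1)).mpr (tendsto_invPoch hq1)
      have t3 : Tendsto (fun s : ℕ => 1 - q ^ (s + 1)) atTop (𝓝 (1 - 0)) :=
        ((tendsto_add_atTop_iff_nat 1).mpr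
          (tendsto_pow_atTop_nhds_zero_of_norm_lt_one hq1)).const_sub 1
      have t4 : Tendsto (fun s : ℕ => 1 + (2 * j : ℂ) * (1 / ((s : ℂ) + 1))) atTop
          (𝓝 (1 + (2 * j : ℂ) * 0)) :=
        ((tendsto_one_div_add_atTop_nhds_zero_nat (𝕜 := ℂ)).const_mul _).const_add 1
      have t := ((((t1.mul t4).mul t2).mul t3).mul_const (q ^ j * invPoch q j))
      have e : U * (1 + (2 * j : ℂ) * 0) * U * (1 - 0) * (q ^ j * invPoch q j)
          = U ^ 2 * (q ^ j * invPoch q j) := by ring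
      rw [e] at t
      refine t.congr fun s => ?_
      have hs : ((s : ℂ) + 1) ≠ 0 := Nat.cast_add_one_ne_zero s
      have hs' : (((s + 2 * j : ℕ) : ℂ) + 1) ≠ 0 := Nat.cast_add_one_ne_zero _
      have e1 : 1 + (2 * j : ℂ) * (1 / ((s : ℂ) + 1))
          = (((s + 2 * j : ℕ) : ℂ) + 1) / ((s : ℂ) + 1) := by
        push_cast; field_simp; ring
      have e2 : 2 * j + s = s + 2 * j := by ring
      have e3 : j + s + 1 = s + (j + 1) := by ring
      rw [e1, conjTerm, e2, e3]
      field_simp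
    · have hb := conj_bound hB hu hH s j j (j + s + 1) (norm_one_sub_pow_le hq1 (s + 1))
      have hs : (0 : ℝ) < (s : ℝ) + 1 := by positivity
      have e2 : ‖((s : ℂ) + 1)‖ = (s : ℝ) + 1 := by exact_mod_cast Complex.norm_natCast (s + 1)
      rw [norm_div, e2, div_le_iff₀ hs]
      refine hb.trans (le_of_eq ?_)
      ring
  rw [tsum_mul_left, (hasSum_euler hq0 hq1).tsum_eq] at hlim
  have hc : Tendsto (fun s : ℕ => ∑' j, conjTerm q s j / ((s : ℂ) + 1)) atTop
      (𝓝 (∑' j, conjTerm q 0 j)) := by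
    refine tendsto_const_nhds.congr fun s => ?_
    have hs : ((s : ℂ) + 1) ≠ 0 := Nat.cast_add_one_ne_zero s
    rw [tsum_div_const, conjSum_eq_mul hq0 hq1 s, mul_div_cancel_left₀ _ hs]
  rw [tendsto_nhds_unique hc hlim]
  ring

/-! ### Summing the Bailey chain -/

/-- Summation of a summable double series along antidiagonals. -/
lemma hasSum_antidiagonal {f : ℕ × ℕ → ℂ} (hf : Summable f) :
    HasSum (fun m : ℕ => ∑ p ∈ antidiagonal m, f p) (∑' p, f p) := by
  have h := (HasAntidiagonal.sigmaAntidiagonalEquivProd (A := ℕ)).hasSum_iff.mpr hf.hasSum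
  refine h.sigma fun m => ?_
  have := Finset.hasSum (antidiagonal m) f
  exact this

/-- Terms `(2r+1)(-1)^r x^{r(r+1)/2}` of Jacobi's series for `(x;x)_∞^3`. -/
noncomputable def jacobiTerm (x : ℂ) (r : ℕ) : ℂ :=
  (-1) ^ r * (2 * (r : ℂ) + 1) * x ^ ((r + 1).choose 2)

/-- Bailey's lemma for the `n`-th pair of the chain and the conjugate pair `conjSum_eq`: insert
`baileyBeta_eq`, put `l = r + j` and sum over `j` first. -/
lemma bailey_sum {q : ℂ} (hq0 : 0 < ‖q‖) (hq1 : ‖q‖ < 1) (n : ℕ) :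
    ∑' l : ℕ, q ^ l * rogersSzego q (2 * l) * baileyBeta q n l
      = ((qPochInf q q)⁻¹) ^ 3 * ∑' r : ℕ, jacobiTerm (q ^ (2 * n + 1)) r := by
  obtain ⟨B, hB, hu, hH⟩ := exists_bounds hq1
  let w : ℕ × ℕ → ℂ := fun p => q ^ p.1 * baileyAlpha q n p.1 *
    (q ^ p.2 * rogersSzego q (2 * p.2 + 2 * p.1) * invPoch q p.2 * invPoch q (p.2 + 2 * p.1 + 1))
  have hα : ∀ r, ‖baileyAlpha q n r‖ ≤ 2 := by
    intro r
    rw [baileyAlpha, norm_mul, norm_mul, norm_mul]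
    simp only [norm_pow, norm_neg, norm_one, one_pow, one_mul]
    have h1 := norm_one_sub_pow_le hq1 (2 * r + 1)
    have h2 := pow_le_one₀ (n := r.choose 2) (norm_nonneg q) hq1.le
    have h3 := pow_le_one₀ (n := n * (r ^ 2 + r)) (norm_nonneg q) hq1.le
    calc _ ≤ 1 * 1 * (2 : ℝ) := by gcongr
      _ = 2 := by ring
  have hw : Summable w := by
    refine Summable.of_norm_bounded (g := fun p : ℕ × ℕ => (16 * B ^ 3) *
      ((((p.1 : ℝ) + 1) ^ 1 * ‖q‖ ^ p.1) * (((p.2 : ℝ) + 1) ^ 1 * ‖q‖ ^ p.2))) ?_ fun p => ?_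
    · refine Summable.mul_left _ (Summable.mul_of_nonneg (summable_poly_geom hq0 hq1 1)
        (summable_poly_geom hq0 hq1 1) ?_ ?_) <;> intro j <;> positivity
    · have hb := conj_bound hB hu hH (2 * p.1) p.2 p.2 (p.2 + 2 * p.1 + 1) (hα p.1)
      have e : w p = q ^ p.1 * (q ^ p.2 * rogersSzego q (2 * p.2 + 2 * p.1) * invPoch q p.2 *
          invPoch q (p.2 + 2 * p.1 + 1) * baileyAlpha q n p.1) := by
        simp only [w]; ring
      rw [e, norm_mul, norm_pow]
      calc _ ≤ ‖q‖ ^ p.1 * ((4 * B ^ 3 * (((2 * p.1 : ℕ) : ℝ) + 1))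
            * (((p.2 : ℝ) + 1) ^ 1 * ‖q‖ ^ p.2)) := by gcongr
        _ ≤ ‖q‖ ^ p.1 * ((4 * B ^ 3 * (4 * ((p.1 : ℝ) + 1)))
            * (((p.2 : ℝ) + 1) ^ 1 * ‖q‖ ^ p.2)) := by
          have : (((2 * p.1 : ℕ) : ℝ) + 1) ≤ 4 * ((p.1 : ℝ) + 1) := by
            push_cast; linarith [Nat.cast_nonneg (α := ℝ) p.1]
          gcongr
        _ = _ := by ring
  have h1 := (hasSum_antidiagonal hw).tsum_eq
  have h2 : ∀ l : ℕ, ∑ p ∈ antidiagonal l, w p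
      = q ^ l * rogersSzego q (2 * l) * baileyBeta q n l := by
    intro l
    rw [baileyBeta_eq hq1, mul_sum, Nat.sum_antidiagonal_eq_sum_range_succ_mk]
    refine sum_congr rfl fun r hr => ?_
    have hr' : r ≤ l := by simpa [Nat.lt_succ_iff] using hr
    obtain ⟨j, rfl⟩ := Nat.exists_eq_add_of_le hr'
    have e1 : r + j - r = j := by omega
    have e2 : 2 * j + 2 * r = 2 * (r + j) := by omega
    have e3 : j + 2 * r + 1 = r + j + r + 1 := by omega
    simp only [w, e1, e2, e3]
    ring
  simp only [h2] at h1
  rw [h1, hw.tsum_prod, ← tsum_mul_left]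
  refine tsum_congr fun r => ?_
  have h3 := conjSum_eq hq0 hq1 (2 * r)
  have e4 : (r + 1).choose 2 = r.choose 2 + r := by
    rw [Nat.choose_succ_succ' r 1, Nat.choose_one_right, add_comm]
  have e5 : r ^ 2 + r = 2 * (r + 1).choose 2 := by
    rw [Nat.choose_two_right, Nat.mul_div_cancel' (Nat.even_mul_pred_self (r + 1)).two_dvd,
      Nat.add_sub_cancel]
    ring
  have e6 : ∀ j, w (r, j) = ((-1) ^ r * q ^ ((r + 1).choose 2) * q ^ (n * (r ^ 2 + r)))
      * conjTerm q (2 * r) j := by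
    intro j
    simp only [w, conjTerm, baileyAlpha, e4, pow_add]
    ring
  simp only [e6]
  rw [tsum_mul_left, h3, jacobiTerm, e5, ← pow_mul]
  push_cast
  ring

/-- Jacobi's identity for `(q;q)_∞^3`: the case `n = 0` of `bailey_sum`, where `β_L = δ_{L,0}`. -/
lemma jacobi_cube {q : ℂ} (hq0 : 0 < ‖q‖) (hq1 : ‖q‖ < 1) :
    ∑' r : ℕ, jacobiTerm q r = qPochInf q q ^ 3 := by
  have h := bailey_sum hq0 hq1 0
  rw [tsum_eq_single 0 (by intro l hl; simp [baileyBeta, hl])] at h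
  simp only [baileyBeta, mul_zero, zero_add, pow_zero, pow_one, rogersSzego_zero, if_true,
    mul_one] at h
  have hP := qPochInf_ne_zero hq1
  field_simp at h
  exact h.symm

/-! ### The polynomials `f^k_{m,l}` as chain sums -/

/-- The sum of `q^{N_1² + ⋯} / ((q;q)_{L-N_1} (q;q)_{N_1-N_2} ⋯)` over chains
`L ≥ N_1 ≥ ⋯ ≥ N_k = 0` with `N_1 + ⋯ + N_k = M`. -/
noncomputable def chainSum (q : ℂ) : ℕ → ℤ → ℕ → ℂ
  | 0, M, L => if M = 0 ∧ L = 0 then 1 else 0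
  | k + 1, M, L => ∑ N ∈ range (L + 1), q ^ (N ^ 2) * invPoch q (L - N) * chainSum q k (M - N) N

lemma chainSum_neg (q : ℂ) (k : ℕ) : ∀ (M : ℤ) (L : ℕ), M < 0 → chainSum q k M L = 0 := by
  induction k with
  | zero => intro M L hM; rw [chainSum, if_neg (by omega)]
  | succ k ih =>
    intro M L hM
    rw [chainSum]
    refine sum_eq_zero fun N _ => ?_
    rw [ih _ _ (by omega), mul_zero]

lemma chainSum_zero_right (q : ℂ) (k : ℕ) (M : ℤ) :
    chainSum q k M 0 = if M = 0 then 1 else 0 := by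
  induction k with
  | zero => simp [chainSum]
  | succ k ih => rw [chainSum]; simp [ih, invPoch_zero]

lemma chainSum_bound {q : ℂ} (hq1 : ‖q‖ < 1) {B : ℝ} (hB : 1 ≤ B)
    (hu : ∀ k, ‖invPoch q k‖ ≤ B) (k : ℕ) :
    ∀ (M : ℤ) (L : ℕ), ‖chainSum q k M L‖ ≤ B ^ k * ((L : ℝ) + 1) ^ k := by
  induction k with
  | zero => intro M L; rw [chainSum]; split_ifs <;> simp
  | succ k ih =>
    intro M L
    rw [chainSum]
    refine (norm_sum_le_of_le (n := fun _ => B * (B ^ k * ((L : ℝ) + 1) ^ k)) _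
      fun N hN => ?_).trans ?_
    · have hN' : (N : ℝ) ≤ L := by
        exact_mod_cast (by simpa [Nat.lt_succ_iff] using hN : N ≤ L)
      rw [norm_mul, norm_mul, norm_pow]
      have h1 := pow_le_one₀ (n := N ^ 2) (norm_nonneg q) hq1.le
      have h2 := hu (L - N)
      have h3 : ‖chainSum q k (M - N) N‖ ≤ B ^ k * ((L : ℝ) + 1) ^ k :=
        (ih _ _).trans (by gcongr)
      calc _ ≤ 1 * B * (B ^ k * ((L : ℝ) + 1) ^ k) := by gcongr
        _ = _ := by ring
    · rw [sum_const, card_range, nsmul_eq_mul]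
      push_cast
      apply le_of_eq; ring

/-- Summing over the total `M` removes the constraint and leaves the Bailey chain. -/
lemma hasSum_chainSum {q : ℂ} (hq : q ≠ 0) (k : ℕ) : ∀ L : ℕ,
    HasSum (fun M : ℤ => q ^ M * chainSum q k M L) (baileyBeta q k L) := by
  induction k with
  | zero =>
    intro L
    have h := hasSum_single (f := fun M : ℤ => q ^ M * chainSum q 0 M L) 0
      (by intro M hM; simp [chainSum, hM])
    simpa [chainSum, baileyBeta] using h
  | succ k ih =>
    intro L
    have h : ∀ N ∈ range (L + 1), HasSum
        (fun M : ℤ => q ^ M * (q ^ (N ^ 2) * invPoch q (L - N) * chainSum q k (M - N) N))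
        (q ^ (N ^ 2 + N) * invPoch q (L - N) * baileyBeta q k N) := by
      intro N _
      have h1 := (Equiv.subRight (N : ℤ)).hasSum_iff.mpr (ih N)
      have h2 := h1.mul_left (q ^ (N ^ 2 + N) * invPoch q (L - N))
      have heq : (fun M : ℤ => q ^ M * (q ^ (N ^ 2) * invPoch q (L - N) * chainSum q k (M - N) N))
          = fun M => q ^ (N ^ 2 + N) * invPoch q (L - N)
            * ((fun M : ℤ => q ^ M * chainSum q k M N) ∘ Equiv.subRight (N : ℤ)) M := by
        funext M
        have e : q ^ M = q ^ N * q ^ (M - N) := by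
          rw [← zpow_natCast, ← zpow_add₀ hq]; congr 1; ring
        simp only [Function.comp, Equiv.subRight_apply]
        rw [e, pow_add]
        ring
      rw [heq]
      exact h2
    have h2 := hasSum_sum h
    simpa only [chainSum, baileyBeta, mul_sum] using h2

/-- The summand of `f^{d+2}_{M+L,L} / (q;q)_L`. -/
noncomputable def chainTerm (q : ℂ) (d : ℕ) (M L : ℤ) (i : Fin d → ℕ) : ℂ :=
  q ^ ((∑ t ∈ range d, (∑ j ∈ univ.filter (fun j : Fin d => t ≤ j.val), (i j : ℤ)) ^ 2)
      + ((M - ∑ j, ((j.val : ℤ) + 2) * (i j : ℤ)) + ∑ j, (i j : ℤ)) ^ 2)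
    * (∏ j, qFactInv q (i j : ℤ))
    * qFactInv q (M - ∑ j, ((j.val : ℤ) + 2) * (i j : ℤ))
    * qFactInv q (L - (M - ∑ j, ((j.val : ℤ) + 1) * (i j : ℤ)))

lemma qFactInv_neg (q : ℂ) {a : ℤ} (ha : a < 0) : qFactInv q a = 0 := by
  rw [qFactInv, if_neg (by omega)]

lemma qFactInv_natCast (q : ℂ) (a : ℕ) : qFactInv q (a : ℤ) = invPoch q a := by
  simp [qFactInv, invPoch]

lemma fpoly_eq_tsum (q : ℂ) (d : ℕ) (m : ℤ) (l : ℕ) :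
    fpoly (d + 2) q m l = qPoch q q l * ∑' i : Fin d → ℕ, chainTerm q d (m - l) l i := by
  rw [← tsum_mul_left]
  change (∑' i : Fin d → ℕ, _) = _
  refine tsum_congr fun i => ?_
  have e : 2 * (l : ℤ) + ∑ j : Fin d, ((j.val : ℤ) + 1) * (i j : ℤ) - m
      = l - (m - l - ∑ j, ((j.val : ℤ) + 1) * (i j : ℤ)) := by ring
  have e' := congrArg (qFactInv q) e
  rw [chainTerm, ← e', Int.toNat_natCast]
  have assoc : ∀ A p P v w : ℂ, A * p * P * v * w = p * (A * P * v * w) := by intros; ring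
  exact assoc _ _ _ _ _

lemma finite_support_chainTerm (q : ℂ) (d : ℕ) (M L : ℤ) :
    (Function.support (chainTerm q d M L)).Finite := by
  refine (Set.finite_Icc (0 : Fin d → ℕ) (fun _ => M.toNat)).subset fun i hi => ?_
  refine ⟨fun j => Nat.zero_le _, fun j => ?_⟩
  by_contra hj
  apply hi
  have hj' : M.toNat < i j := by simpa using hj
  have h1 : ((j.val : ℤ) + 2) * (i j : ℤ) ≤ ∑ j, ((j.val : ℤ) + 2) * (i j : ℤ) :=
    single_le_sum (f := fun j : Fin d => ((j.val : ℤ) + 2) * (i j : ℤ))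
      (fun j _ => by positivity) (mem_univ j)
  have h2 : (i j : ℤ) ≤ ((j.val : ℤ) + 2) * (i j : ℤ) := by
    nlinarith [Int.natCast_nonneg (i j), Int.natCast_nonneg j.val,
      mul_nonneg (Int.natCast_nonneg (i j)) (Int.natCast_nonneg j.val)]
  rw [chainTerm, qFactInv_neg q (a := M - _) (by omega), mul_zero, zero_mul]

/-- Peeling off `N = N_1` from the chain; `a = i_3` is recovered as `i_2` of the shorter chain. -/
lemma chainTerm_cons {q : ℂ} (hq : q ≠ 0) (d : ℕ) (M L : ℤ) (a : ℕ) (i : Fin d → ℕ) (N : ℤ)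
    (hN : N = M - ∑ j, ((j.val : ℤ) + 2) * (i j : ℤ) - a) :
    chainTerm q (d + 1) M L (Fin.cons a i)
      = q ^ (N ^ 2) * qFactInv q (L - N) * chainTerm q d (M - N) N i := by
  have s1 : ∑ j : Fin (d + 1), ((j.val : ℤ) + 2) * ((Fin.cons a i : Fin (d + 1) → ℕ) j : ℤ)
      = 2 * a + (∑ j, ((j.val : ℤ) + 2) * (i j : ℤ)) + ∑ j, (i j : ℤ) := by
    rw [Fin.sum_univ_succ, add_assoc, ← sum_add_distrib]
    simp only [Fin.cons_zero, Fin.cons_succ, Fin.val_zero, Fin.val_succ]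
    push_cast
    congr 1
    exact sum_congr rfl fun j _ => by ring
  have s2 : ∑ j : Fin (d + 1), ((j.val : ℤ) + 1) * ((Fin.cons a i : Fin (d + 1) → ℕ) j : ℤ)
      = a + ∑ j, ((j.val : ℤ) + 2) * (i j : ℤ) := by
    rw [Fin.sum_univ_succ]
    simp only [Fin.cons_zero, Fin.cons_succ, Fin.val_zero, Fin.val_succ]
    push_cast
    rw [one_mul]
    congr 1
  have s3 : ∑ j : Fin (d + 1), ((Fin.cons a i : Fin (d + 1) → ℕ) j : ℤ) = a + ∑ j, (i j : ℤ) := by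
    rw [Fin.sum_univ_succ]; simp
  have s4 : ∑ t ∈ range (d + 1), (∑ j ∈ univ.filter (fun j : Fin (d + 1) => t ≤ j.val),
      ((Fin.cons a i : Fin (d + 1) → ℕ) j : ℤ)) ^ 2
      = (∑ t ∈ range d, (∑ j ∈ univ.filter (fun j : Fin d => t ≤ j.val), (i j : ℤ)) ^ 2)
        + (a + ∑ j, (i j : ℤ)) ^ 2 := by
    rw [sum_range_succ']
    congr 1
    · refine sum_congr rfl fun t _ => ?_
      rw [sum_filter, sum_filter, Fin.sum_univ_succ]
      simp
    · rw [← s3]; simp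
  have s5 : ∑ j : Fin d, ((j.val : ℤ) + 2) * (i j : ℤ)
      = (∑ j : Fin d, ((j.val : ℤ) + 1) * (i j : ℤ)) + ∑ j, (i j : ℤ) := by
    rw [← sum_add_distrib]
    exact sum_congr rfl fun j _ => by ring
  rw [chainTerm, chainTerm, s1, s2, s3, s4, Fin.prod_univ_succ]
  simp only [Fin.cons_zero, Fin.cons_succ]
  generalize (∑ t ∈ range d, (∑ j ∈ univ.filter (fun j : Fin d => t ≤ j.val), (i j : ℤ)) ^ 2) = E
  generalize (∏ j, qFactInv q (i j : ℤ)) = P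
  generalize (∑ j : Fin d, ((j.val : ℤ) + 2) * (i j : ℤ)) = S2 at *
  generalize (∑ j : Fin d, ((j.val : ℤ) + 1) * (i j : ℤ)) = S1 at *
  generalize (∑ j : Fin d, (i j : ℤ)) = S0 at *
  have f1 : M - (2 * a + S2 + S0) + (a + S0) = N := by rw [hN]; ring
  have f2 : M - N - S2 = a := by rw [hN]; ring
  have f3 : M - (2 * a + S2 + S0) = N - (M - N - S1) := by rw [hN, s5]; ring
  have f4 : M - (a + S2) = N := by rw [hN]; ring
  rw [f1, f2, f3, f4, zpow_add₀ hq]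
  ring

/-- For fixed remaining indices `i`, summing over `a = i_3` is summing over `N = N_1`. -/
lemma tsum_cons_chainTerm {q : ℂ} (hq : q ≠ 0) (d : ℕ) (M : ℤ) (L : ℕ) (i : Fin d → ℕ) :
    ∑' a : ℕ, chainTerm q (d + 1) M L (Fin.cons a i)
      = ∑ N ∈ range (L + 1), q ^ (N ^ 2) * invPoch q (L - N) * chainTerm q d (M - N) N i := by
  let g : ℤ → ℂ := fun N => q ^ (N ^ 2) * qFactInv q (L - N) * chainTerm q d (M - N) N i
  obtain ⟨S, hS⟩ : ∃ S : ℤ, S = M - ∑ j, ((j.val : ℤ) + 2) * (i j : ℤ) := ⟨_, rfl⟩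
  have s5 : ∑ j : Fin d, ((j.val : ℤ) + 2) * (i j : ℤ)
      = (∑ j : Fin d, ((j.val : ℤ) + 1) * (i j : ℤ)) + ∑ j, (i j : ℤ) := by
    rw [← sum_add_distrib]
    exact sum_congr rfl fun j _ => by ring
  have s6 : 0 ≤ ∑ j, (i j : ℤ) := sum_nonneg fun j _ => Int.natCast_nonneg _
  have gS : ∀ N, S < N → g N = 0 := by
    intro N hN
    simp only [g, chainTerm]
    rw [qFactInv_neg q (a := M - N - _) (by omega)]
    ring
  have gL : ∀ N, (L : ℤ) < N → g N = 0 := by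
    intro N hN
    simp only [g]
    rw [qFactInv_neg q (a := L - N) (by omega)]
    ring
  have g0 : ∀ N, N < 0 → g N = 0 := by
    intro N hN
    rcases lt_or_ge S N with h | h
    · exact gS N h
    · simp only [g, chainTerm]
      rw [qFactInv_neg q (a := N - _) (by omega)]
      ring
  have h1 : ∑' a : ℕ, chainTerm q (d + 1) M L (Fin.cons a i) = ∑' N : ℤ, g N := by
    have hinj : Function.Injective fun a : ℕ => S - (a : ℤ) := by
      intro a b h; simp only at h; omega
    rw [← hinj.tsum_eq (f := g)]
    · exact tsum_congr fun a => chainTerm_cons hq d M L a i _ (by rw [hS])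
    · intro N hN
      have : N ≤ S := by by_contra h; exact hN (gS N (by omega))
      exact ⟨(S - N).toNat, by simp only; omega⟩
  have h2 : ∑' N : ℕ, g N = ∑' N : ℤ, g N :=
    Nat.cast_injective.tsum_eq (f := g) (by
      intro N hN
      have : 0 ≤ N := by by_contra h; exact hN (g0 N (by omega))
      exact ⟨N.toNat, Int.toNat_of_nonneg this⟩)
  rw [h1, ← h2, tsum_eq_sum (s := range (L + 1))]
  · refine sum_congr rfl fun N hN => ?_
    have hN' : N ≤ L := by simpa [Nat.lt_succ_iff] using hN
    have e1 : (L : ℤ) - N = ((L - N : ℕ) : ℤ) := by omega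
    simp only [g]
    rw [e1, qFactInv_natCast]
    norm_cast
  · intro N hN
    exact gL N (by simp at hN; omega)

lemma tsum_chainTerm_succ {q : ℂ} (hq : q ≠ 0) (d : ℕ) (M : ℤ) (L : ℕ) :
    ∑' i : Fin (d + 1) → ℕ, chainTerm q (d + 1) M L i
      = ∑ N ∈ range (L + 1), q ^ (N ^ 2) * invPoch q (L - N)
          * ∑' i : Fin d → ℕ, chainTerm q d (M - N) N i := by
  have hsum : ∀ (d : ℕ) (M L : ℤ), Summable (chainTerm q d M L) := fun d M L =>
    summable_of_hasFiniteSupport (finite_support_chainTerm q d M L)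
  obtain ⟨e, he⟩ : ∃ e : ℕ × (Fin d → ℕ) ≃ (Fin (d + 1) → ℕ),
      ∀ p, e p = Fin.cons p.1 p.2 := ⟨Fin.consEquiv fun _ => ℕ, fun _ => rfl⟩
  have hs2 : Summable fun p : ℕ × (Fin d → ℕ) => chainTerm q (d + 1) M L (Fin.cons p.1 p.2) := by
    have h := e.summable_iff.mpr (hsum (d + 1) M L)
    simpa only [Function.comp_def, he] using h
  have hl : ∑' i : Fin (d + 1) → ℕ, chainTerm q (d + 1) M L i
      = ∑' (i : Fin d → ℕ) (a : ℕ), chainTerm q (d + 1) M L (Fin.cons a i) := by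
    rw [← e.tsum_eq]
    simp only [he]
    rw [hs2.tsum_prod]
    exact (Summable.tsum_comm (f := fun (a : ℕ) (i : Fin d → ℕ) =>
      chainTerm q (d + 1) M L (Fin.cons a i)) hs2).symm
  rw [hl]
  simp only [← tsum_mul_left]
  rw [← Summable.tsum_finsetSum (fun N _ => (hsum d _ _).mul_left _)]
  exact tsum_congr fun i => tsum_cons_chainTerm hq d M L i

lemma tsum_chainTerm {q : ℂ} (hq : q ≠ 0) (d : ℕ) : ∀ (M : ℤ) (L : ℕ),
    ∑' i : Fin d → ℕ, chainTerm q d M L i = chainSum q (d + 2) M L := by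
  induction d with
  | zero =>
    intro M L
    have h1 : ∀ (M : ℤ) (L : ℕ), chainSum q 1 M L = if M = 0 then invPoch q L else 0 := by
      intro M L
      rw [chainSum, sum_eq_single 0]
      · simp [chainSum]
      · intro N _ hN; simp [chainSum, hN]
      · simp
    rw [tsum_eq_single default (fun i hi => absurd (Subsingleton.elim _ _) hi), chainSum]
    simp only [h1, chainTerm, range_zero, sum_empty, univ_eq_empty, prod_empty, zero_add, sub_zero,
      add_zero, mul_one]
    rcases lt_or_ge M 0 with hM | hM
    · rw [qFactInv_neg q hM]
      simp only [mul_zero, zero_mul]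
      refine (sum_eq_zero fun N _ => ?_).symm
      rw [if_neg (by omega), mul_zero]
    · lift M to ℕ using hM
      rcases le_or_gt M L with h | h
      · rw [sum_eq_single M]
        · have e1 : (L : ℤ) - M = ((L - M : ℕ) : ℤ) := by omega
          rw [e1, qFactInv_natCast, qFactInv_natCast, if_pos (by omega)]
          norm_cast
          ring
        · intro N _ hN; rw [if_neg (by omega), mul_zero]
        · intro h'; simp at h'; omega
      · rw [qFactInv_neg q (a := (L : ℤ) - M) (by omega), mul_zero]
        refine (sum_eq_zero fun N hN => ?_).symm
        have := mem_range.mp hN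
        rw [if_neg (by omega), mul_zero]
  | succ d ih =>
    intro M L
    rw [tsum_chainTerm_succ hq, chainSum]
    simp only [ih]

lemma summable_chain {q : ℂ} (hq0 : 0 < ‖q‖) (hq1 : ‖q‖ < 1) (n : ℕ) :
    Summable fun p : ℕ × ℕ =>
      q ^ p.1 * chainSum q n p.1 p.2 * (q ^ p.2 * rogersSzego q (2 * p.2)) := by
  obtain ⟨B, hB, hu, hH⟩ := exists_bounds hq1
  refine Summable.of_norm_bounded (g := fun p : ℕ × ℕ => (2 * B ^ (n + 1)) *
    ((((p.1 : ℝ) + 1) ^ 0 * ‖q‖ ^ p.1) * (((p.2 : ℝ) + 1) ^ (n + 1) * ‖q‖ ^ p.2))) ?_ fun p => ?_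
  · refine Summable.mul_left _ (Summable.mul_of_nonneg (summable_poly_geom hq0 hq1 0)
      (summable_poly_geom hq0 hq1 (n + 1)) ?_ ?_) <;> intro j <;> positivity
  · rw [norm_mul, norm_mul, norm_mul, norm_pow, norm_pow]
    have h1 := chainSum_bound hq1 hB hu n p.1 p.2
    have h2 : ‖rogersSzego q (2 * p.2)‖ ≤ 2 * B * ((p.2 : ℝ) + 1) := by
      have := (hH (2 * p.2 + 0)).trans (bound_arith hB p.2 0)
      simpa using this
    calc _ ≤ ‖q‖ ^ p.1 * (B ^ n * ((p.2 : ℝ) + 1) ^ n)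
          * (‖q‖ ^ p.2 * (2 * B * ((p.2 : ℝ) + 1))) := by gcongr
      _ = _ := by ring

lemma tsum_chain {q : ℂ} (hq0 : 0 < ‖q‖) (hq1 : ‖q‖ < 1) (n : ℕ) :
    ∑' p : ℕ × ℕ, q ^ p.1 * chainSum q n p.1 p.2 * (q ^ p.2 * rogersSzego q (2 * p.2))
      = ∑' l : ℕ, q ^ l * rogersSzego q (2 * l) * baileyBeta q n l := by
  have hq : q ≠ 0 := norm_pos_iff.mp hq0
  have hs := summable_chain hq0 hq1 n
  rw [hs.tsum_prod, ← Summable.tsum_comm (f := fun (M l : ℕ) =>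
    q ^ M * chainSum q n M l * (q ^ l * rogersSzego q (2 * l))) hs]
  refine tsum_congr fun l => ?_
  rw [tsum_mul_right, mul_comm]
  congr 1
  have h := (Nat.cast_injective (R := ℤ)).hasSum_iff
    (f := fun M : ℤ => q ^ M * chainSum q n M l) (a := baileyBeta q n l) (by
      intro M hM
      have : M < 0 := by
        by_contra h
        exact hM ⟨M.toNat, Int.toNat_of_nonneg (by omega)⟩
      rw [chainSum_neg q n M l this, mul_zero])
  have h' := (h.mpr (hasSum_chainSum hq n l)).tsum_eq
  simpa [Function.comp_def] using h'


/-- `((q^{2n+1};q^{2n+1})_∞/(q;q)_∞)^3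
    = 1 + Σ_{m≥1} q^m Σ_{l=1}^{m} (f^n_{m,l}(q)/(q;q)_l) Σ_{k=0}^{2l} [2l choose k]_q`. -/
theorem statement10 (n : ℕ) (hn : 2 ≤ n) (q : ℂ) (hq0 : 0 < ‖q‖) (hq1 : ‖q‖ < 1) :
    (qPochInf (q ^ (2 * n + 1)) (q ^ (2 * n + 1)) / qPochInf q q) ^ 3
      = 1 + ∑' m : ℕ, q ^ m *
          ∑ l ∈ Finset.Icc 1 m, fpoly n q (m : ℤ) (l : ℤ) / qPoch q q l *
            ∑ k ∈ Finset.range (2 * l + 1), qBinom q (2 * (l : ℤ)) (k : ℤ) := by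
  obtain ⟨d, rfl⟩ : ∃ d, n = d + 2 := ⟨n - 2, by omega⟩
  have hq : q ≠ 0 := norm_pos_iff.mp hq0
  have hx0 : 0 < ‖q ^ (2 * (d + 2) + 1)‖ := by rw [norm_pow]; positivity
  have hx1 : ‖q ^ (2 * (d + 2) + 1)‖ < 1 := by
    rw [norm_pow]; exact pow_lt_one₀ (norm_nonneg q) hq1 (Nat.succ_ne_zero _)
  have hL : ∑' p : ℕ × ℕ, q ^ p.1 * chainSum q (d + 2) p.1 p.2 * (q ^ p.2 * rogersSzego q (2 * p.2))
      = (qPochInf (q ^ (2 * (d + 2) + 1)) (q ^ (2 * (d + 2) + 1)) / qPochInf q q) ^ 3 := by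
    rw [tsum_chain hq0 hq1, bailey_sum hq0 hq1, jacobi_cube hx0 hx1, div_pow, inv_pow, div_eq_mul_inv,
      mul_comm]
  rw [← hL]
  have h1 := hasSum_antidiagonal (summable_chain hq0 hq1 (d + 2))
  have h2 := h1.sub (hasSum_ite_eq (0 : ℕ) (1 : ℂ))
  rw [← sub_eq_iff_eq_add', ← h2.tsum_eq]
  refine tsum_congr fun m => ?_
  have hm : ∀ l ∈ Icc 1 m, q ^ m * (fpoly (d + 2) q (m : ℤ) (l : ℤ) / qPoch q q l *
      ∑ k ∈ range (2 * l + 1), qBinom q (2 * (l : ℤ)) (k : ℤ))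
      = q ^ (m - l) * chainSum q (d + 2) ((m - l : ℕ) : ℤ) l * (q ^ l * rogersSzego q (2 * l)) := by
    intro l hl
    have hl' := (mem_Icc.mp hl).2
    have e1 : (m : ℤ) - l = ((m - l : ℕ) : ℤ) := by omega
    have e2 : q ^ m = q ^ (m - l) * q ^ l := by rw [← pow_add]; congr 1; omega
    have e3 : (2 * (l : ℤ)) = ((2 * l : ℕ) : ℤ) := by push_cast; rfl
    rw [fpoly_eq_tsum, tsum_chainTerm hq, e1, mul_div_cancel_left₀ _ (qPoch_ne_zero hq1 l), e3,
      sum_qBinom, e2]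
    ring
  rw [mul_sum, sum_congr rfl hm, ← Nat.sum_antidiagonal_swap,
    Nat.sum_antidiagonal_eq_sum_range_succ_mk, sum_range_succ']
  -- the terms with `l = 0` contribute only `1`, at `m = 0`
  have h0 : q ^ m * chainSum q (d + 2) (m : ℤ) 0 * (q ^ 0 * rogersSzego q (2 * 0))
      = if m = 0 then 1 else 0 := by
    rw [chainSum_zero_right, mul_zero, rogersSzego_zero]
    rcases Nat.eq_zero_or_pos m with rfl | h
    · simp
    · simp [h.ne']
  simp only [Prod.swap, Nat.sub_zero]
  rw [h0, add_sub_cancel_right, ← Ico_add_one_right_eq_Icc, sum_Ico_eq_sum_range, Nat.add_sub_cancel]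
  refine sum_congr rfl fun l _ => ?_
  rw [add_comm 1 l]
end

section
/- Let W be a weighted set consisting of exactly 3 elements of weight 0 and exactly 4 elements of weight i for each integer i ≥ 1 (corresponding to the variables X_0, Y_0, Z_0 and X_i, Y_i, Z_i, J_i for i ≥ 1). For every integer ℓ ≥ 1, the number of multisets of cardinality 3 of elements of W whose weights sum to ℓ equals 24 + 64·⌊((ℓ−3)^2 + 6)/12⌋ + 20·⌊(ℓ−1)/3⌋ + 58·⌊(ℓ−1)/2⌋ − 20·⌊ℓ/3⌋ + 30·⌊ℓ/2⌋. -/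
/-!
Listing the elements of `W` by increasing weight identifies `W` with `ℕ`, the `n`-th element having
weight `(n + 1) / 4` (`wEquiv`). A multiset of cardinality 3 becomes a sorted triple
`a ≤ b ≤ c` of naturals (`card_multisets`), so the number `N` to be computed counts the sorted
triples in the symmetric set `triples ℓ` of ordered triples of total weight `ℓ`.

Burnside's lemma for the action of `S₃` on ordered triples (`burnside`) gives `6 N = A + 3 B + 2 C`,
where `A`, `B`, `C` count the ordered triples of total weight `ℓ` that are arbitrary, of the form
`(a, a, c)`, and of the form `(a, a, a)`. If `m i` is the number of elements of weight `i`, then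
`A = ∑_{i+j+k=ℓ} m i m j m k`, `B = ∑_{2i+k=ℓ} m i m k` and `C = m (ℓ/3)` or `0`. Since
`m i = 4 - [i = 0]`, these have simple closed forms (`card_all`, `card_diag`, `card_diag3`), and the
claimed formula follows by comparing both sides for each residue of `ℓ` modulo 6.
-/

open Finset

/-- The weighted set `W` with exactly 3 elements of weight 0 (namely `X₀, Y₀, Z₀`)
    and exactly 4 elements of weight `i` for each `i ≥ 1` (namely `Xᵢ, Yᵢ, Zᵢ, Jᵢ`):
    the element `⟨(i, j), _⟩` has weight `i`. -/
def Wvar : Type := {p : ℕ × ℕ // p.2 < if p.1 = 0 then 3 else 4}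

/-- The weight of an element of `W`. -/
def Wweight (x : Wvar) : ℕ := x.1.1

/-! ### Enumeration of `W` -/

/-- The enumeration of `W` by increasing weight: indices `0, 1, 2` have weight `0`, and indices
`4 * i - 1, …, 4 * i + 2` have weight `i` for `i ≥ 1`. -/
def wEquiv : ℕ ≃ Wvar where
  toFun n := ⟨((n + 1) / 4, if n < 3 then n else (n + 1) % 4), by
    dsimp only
    split_ifs <;> omega⟩
  invFun x := if x.1.1 = 0 then x.1.2 else 4 * x.1.1 - 1 + x.1.2
  left_inv n := by
    dsimp only
    split_ifs <;> omega
  right_inv := by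
    rintro ⟨⟨i, j⟩, h⟩
    apply Subtype.ext
    dsimp only at h ⊢
    by_cases hi : i = 0
    · subst hi
      simp only [if_true] at h ⊢
      rw [if_pos h]
      ext <;> dsimp only
      omega
    · simp only [if_neg hi] at h ⊢
      rw [if_neg (by omega)]
      ext <;> dsimp only <;> omega

lemma weight_wEquiv (n : ℕ) : Wweight (wEquiv n) = (n + 1) / 4 := rfl

/-- The ordered triples of indices of total weight `l`; an index of weight at most `l` is smaller
than `4 * l + 3`. -/
def triples (l : ℕ) : Finset (ℕ × ℕ × ℕ) :=
  (range (4 * l + 3) ×ˢ range (4 * l + 3) ×ˢ range (4 * l + 3)).filter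
    fun t => (t.1 + 1) / 4 + (t.2.1 + 1) / 4 + (t.2.2 + 1) / 4 = l

lemma mem_triples {l a b c : ℕ} :
    (a, b, c) ∈ triples l ↔ (a + 1) / 4 + (b + 1) / 4 + (c + 1) / 4 = l := by
  simp only [triples, mem_filter, mem_product, mem_range]
  constructor
  · exact fun h => h.2
  · intro h
    refine ⟨⟨?_, ?_, ?_⟩, h⟩ <;> omega

/-- Multisets of cardinality 3 of total weight `l` correspond to sorted triples of indices. -/
lemma card_multisets (l : ℕ) :
    Nat.card {s : Multiset Wvar // Multiset.card s = 3 ∧ (s.map Wweight).sum = l}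
      = #{t ∈ triples l | t.1 ≤ t.2.1 ∧ t.2.1 ≤ t.2.2} := by
  symm
  rw [← Nat.card_eq_finsetCard]
  let f : {t // t ∈ {t ∈ triples l | t.1 ≤ t.2.1 ∧ t.2.1 ≤ t.2.2}} →
      {s : Multiset Wvar // Multiset.card s = 3 ∧ (s.map Wweight).sum = l} := fun t =>
    ⟨Multiset.map wEquiv ↑[t.1.1, t.1.2.1, t.1.2.2], by simp, by
      obtain ⟨⟨a, b, c⟩, h⟩ := t
      rw [mem_filter, mem_triples] at h
      simp [weight_wEquiv, ← h.1, add_assoc]⟩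
  refine Nat.card_eq_of_bijective f ⟨?_, ?_⟩
  · rintro ⟨⟨a, b, c⟩, h⟩ ⟨⟨a', b', c'⟩, h'⟩ heq
    rw [mem_filter] at h h'
    have h₀ : Multiset.map wEquiv ↑[a, b, c] = Multiset.map wEquiv ↑[a', b', c'] :=
      congrArg Subtype.val heq
    have h₁ := Multiset.map_injective wEquiv.injective h₀
    have h₂ : [a, b, c] = [a', b', c'] := by
      refine (Multiset.coe_eq_coe.mp h₁).eq_of_pairwise' (r := (· ≤ ·)) ?_ ?_
      · have := h.2
        simp at this ⊢
        omega
      · have := h'.2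
        simp at this ⊢
        omega
    simpa using h₂
  · rintro ⟨s, hs, hw⟩
    have hm : (s.map wEquiv.symm).map wEquiv = s := by simp
    have hsort := (s.map wEquiv.symm).sort_eq (· ≤ ·)
    have hpair := (s.map wEquiv.symm).pairwise_sort (· ≤ ·)
    have hlen : ((s.map wEquiv.symm).sort (· ≤ ·)).length = 3 := by simp [hs]
    obtain ⟨a, b, c, habc⟩ := List.length_eq_three.mp hlen
    rw [habc] at hsort hpair
    rw [← hsort] at hm
    refine ⟨⟨(a, b, c), ?_⟩, Subtype.ext hm⟩
    rw [mem_filter, mem_triples]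
    subst hm
    simp [weight_wEquiv] at hw hpair ⊢
    omega

/-! ### Burnside's lemma for triples -/

lemma burnside (l : ℕ) :
    6 * #{t ∈ triples l | t.1 ≤ t.2.1 ∧ t.2.1 ≤ t.2.2}
      = #(triples l) + 3 * #{t ∈ triples l | t.1 = t.2.1}
        + 2 * #{t ∈ triples l | t.1 = t.2.1 ∧ t.2.1 = t.2.2} := by
  -- Reindexing a sum over `triples l` by a transposition or by a 3-cycle.
  have swap (f : ℕ → ℕ → ℕ → ℕ) :
      ∑ t ∈ triples l, f t.1 t.2.1 t.2.2 = ∑ t ∈ triples l, f t.2.1 t.1 t.2.2 := by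
    refine sum_nbij' (fun t => (t.2.1, t.1, t.2.2)) (fun t => (t.2.1, t.1, t.2.2)) ?_ ?_ ?_ ?_ ?_
    all_goals
      rintro ⟨a, b, c⟩ h
      simp only [mem_triples] at h ⊢
    all_goals omega
  have rot (f : ℕ → ℕ → ℕ → ℕ) :
      ∑ t ∈ triples l, f t.1 t.2.1 t.2.2 = ∑ t ∈ triples l, f t.2.1 t.2.2 t.1 := by
    refine sum_nbij' (fun t => (t.2.2, t.1, t.2.1)) (fun t => (t.2.1, t.2.2, t.1)) ?_ ?_ ?_ ?_ ?_
    all_goals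
      rintro ⟨a, b, c⟩ h
      simp only [mem_triples] at h ⊢
    all_goals omega
  let s : ℕ → ℕ → ℕ → ℕ := fun a b c => if a ≤ b ∧ b ≤ c then 1 else 0
  let e : ℕ → ℕ → ℕ → ℕ := fun a b _ => if a = b then 1 else 0
  -- The number of permutations sorting a given triple is the order of its stabiliser.
  have key : ∑ t ∈ triples l, (s t.1 t.2.1 t.2.2 + s t.2.1 t.2.2 t.1 + s t.2.2 t.1 t.2.1
        + s t.2.1 t.1 t.2.2 + s t.1 t.2.2 t.2.1 + s t.2.2 t.2.1 t.1)
      = ∑ t ∈ triples l, (1 + (e t.1 t.2.1 t.2.2 + e t.2.1 t.2.2 t.1 + e t.2.2 t.1 t.2.1)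
        + 2 * (if t.1 = t.2.1 ∧ t.2.1 = t.2.2 then 1 else 0)) := by
    refine sum_congr rfl ?_
    rintro ⟨a, b, c⟩ -
    simp only [s, e]
    rcases lt_trichotomy a b with h₁ | h₁ | h₁ <;> rcases lt_trichotomy b c with h₂ | h₂ | h₂ <;>
      rcases lt_trichotomy a c with h₃ | h₃ | h₃ <;> grind
  simp only [sum_add_distrib, ← mul_sum] at key
  have s1 := rot s
  have s2 := rot fun a b c => s b c a
  have s3 := swap s
  have s4 := rot fun a b c => s b a c
  have s5 := rot fun a b c => s c b a
  have e1 := rot e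
  have e2 := rot fun a b c => e b c a
  simp only [card_eq_sum_ones, sum_filter]
  simp only [s, e] at *
  omega

/-! ### Counting ordered triples -/

/-- The number of elements of `W` of weight `i`. -/
def mult (i : ℕ) : ℕ := if i = 0 then 3 else 4

/-- The indices of weight `i`; truncated subtraction gives the correct three indices for `i = 0`. -/
def fiber (i : ℕ) : Finset ℕ := Ico (4 * i - 1) (4 * i + 3)

lemma mem_fiber {i n : ℕ} : n ∈ fiber i ↔ (n + 1) / 4 = i := by
  simp only [fiber, mem_Ico]; omega

lemma card_fiber (i : ℕ) : #(fiber i) = mult i := by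
  simp only [fiber, mult, Nat.card_Ico]; split_ifs <;> omega

lemma mult_eq (i : ℕ) : (mult i : ℤ) = 4 - if i = 0 then 1 else 0 := by
  unfold mult; split_ifs <;> rfl

lemma card_triples (l : ℕ) :
    #(triples l) = ∑ i ∈ range (l + 1), ∑ j ∈ range (l - i + 1),
      mult i * (mult j * mult (l - i - j)) := by
  have h : triples l = (range (l + 1)).biUnion fun i => (range (l - i + 1)).biUnion fun j =>
      fiber i ×ˢ fiber j ×ˢ fiber (l - i - j) := by
    ext ⟨a, b, c⟩
    simp only [mem_triples, mem_biUnion, mem_product, mem_fiber, mem_range]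
    constructor
    · intro h
      exact ⟨_, by omega, _, by omega, rfl, rfl, by omega⟩
    · rintro ⟨i, hi, j, hj, h₁, h₂, h₃⟩
      omega
  rw [h, card_biUnion]
  · refine sum_congr rfl fun i _ => ?_
    rw [card_biUnion]
    · simp only [card_product, card_fiber]
    · intro j _ j' _ hne
      rw [Function.onFun, Finset.disjoint_left]
      rintro ⟨a, b, c⟩ h₁ h₂
      simp only [mem_product, mem_fiber] at h₁ h₂
      omega
  · intro i _ i' _ hne
    rw [Function.onFun, Finset.disjoint_left]
    rintro ⟨a, b, c⟩ h₁ h₂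
    simp only [mem_biUnion, mem_product, mem_fiber] at h₁ h₂
    obtain ⟨_, _, h₁, _⟩ := h₁
    obtain ⟨_, _, h₂, _⟩ := h₂
    omega

lemma sum_pairs (n : ℕ) :
    ∑ j ∈ range (n + 1), (mult j : ℤ) * mult (n - j) = 16 * n + 8 + if n = 0 then 1 else 0 := by
  rcases n with _ | n
  · simp [mult]
  · rw [sum_range_succ, sum_range_succ']
    have h : ∀ j ∈ range n, (mult (j + 1) : ℤ) * mult (n + 1 - (j + 1)) = 16 := by
      intro j hj
      rw [mem_range] at hj
      rw [mult, mult, if_neg (by omega), if_neg (by omega)]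
      rfl
    rw [sum_congr rfl h]
    simp [mult]
    ring

lemma card_all (l : ℕ) (hl : 1 ≤ l) :
    (#(triples l) : ℤ) = 32 * (l + 2) * (l + 1) - 48 * (l + 1) + 12 := by
  rw [card_triples]
  push_cast
  simp only [← mul_sum, sum_pairs]
  -- Reverse the order of summation so that the summand depends on the remaining weight directly.
  rw [← sum_range_reflect]
  obtain ⟨l, rfl⟩ : ∃ k, l = k + 1 := ⟨l - 1, by omega⟩
  rw [sum_range_succ, sum_range_succ']
  have h : ∀ j ∈ range l,
      (mult (l + 1 + 1 - 1 - (j + 1)) : ℤ)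
        * (16 * ((l + 1 - (l + 1 + 1 - 1 - (j + 1)) : ℕ) : ℤ) + 8
          + if l + 1 - (l + 1 + 1 - 1 - (j + 1)) = 0 then 1 else 0) = 64 * j + 96 := by
    intro j hj
    rw [mem_range] at hj
    have h₁ : l + 1 + 1 - 1 - (j + 1) ≠ 0 := by omega
    have h₂ : l + 1 - (l + 1 + 1 - 1 - (j + 1)) = j + 1 := by omega
    rw [h₂, if_neg (by omega), mult, if_neg h₁]
    push_cast
    ring
  rw [sum_congr rfl h]
  have g : ∀ n : ℕ, ∑ j ∈ range n, (64 * (j : ℤ) + 96) = 32 * n * (n - 1) + 96 * n := by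
    intro n
    induction n with
    | zero => simp
    | succ n ih => rw [sum_range_succ, ih]; push_cast; ring
  rw [g]
  simp [mult]
  ring

lemma card_diag (l : ℕ) (hl : 1 ≤ l) :
    (#{t ∈ triples l | t.1 = t.2.1} : ℤ)
      = 16 * (l / 2 + 1 : ℕ) - 4 - if l % 2 = 0 then 4 else 0 := by
  have h : #{t ∈ triples l | t.1 = t.2.1}
      = #((range (l / 2 + 1)).biUnion fun i => fiber i ×ˢ fiber (l - 2 * i)) := by
    refine card_nbij' (fun t => (t.1, t.2.2)) (fun p => (p.1, p.1, p.2)) ?_ ?_ ?_ ?_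
    · rintro ⟨a, b, c⟩ h
      simp only [coe_filter, Set.mem_ofPred_eq, mem_triples] at h
      simp only [mem_coe, mem_biUnion, mem_product, mem_fiber, mem_range]
      obtain ⟨h, rfl⟩ := h
      exact ⟨_, by omega, rfl, by omega⟩
    · rintro ⟨a, c⟩ h
      simp only [mem_coe, mem_biUnion, mem_product, mem_fiber, mem_range] at h
      simp only [coe_filter, Set.mem_ofPred_eq, mem_triples]
      obtain ⟨i, h₁, h₂, h₃⟩ := h
      exact ⟨by omega, trivial⟩
    · rintro ⟨a, b, c⟩ h
      simp only [coe_filter, Set.mem_ofPred_eq] at h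
      simp [h.2]
    · rintro ⟨a, c⟩ h
      rfl
  rw [h, card_biUnion]
  · simp only [card_product, card_fiber]
    rw [sum_range_succ']
    rcases Nat.eq_zero_or_pos (l / 2) with h0 | h0
    · obtain rfl : l = 1 := by omega
      simp [mult]
    · obtain ⟨k, hk⟩ : ∃ k, l / 2 = k + 1 := ⟨l / 2 - 1, by omega⟩
      rw [hk, sum_range_succ]
      have h : ∀ j ∈ range k, mult (j + 1) * mult (l - 2 * (j + 1)) = 16 := by
        intro j hj
        rw [mem_range] at hj
        have : l - 2 * (j + 1) ≠ 0 := by omega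
        simp [mult, this]
      rw [sum_congr rfl h]
      have hlast : mult (l - 2 * (k + 1)) = if l % 2 = 0 then 3 else 4 := by
        unfold mult
        split_ifs <;> omega
      have hfirst : mult (l - 2 * 0) = 4 := if_neg (by omega)
      rw [hlast, hfirst]
      simp only [mult, sum_const, card_range, smul_eq_mul]
      by_cases hp : l % 2 = 0 <;> simp [hp] <;> ring
  · intro i _ i' _ hne
    rw [Function.onFun, Finset.disjoint_left]
    rintro ⟨a, c⟩ h₁ h₂
    simp only [mem_product, mem_fiber] at h₁ h₂
    omega

lemma card_diag3 (l : ℕ) (hl : 1 ≤ l) :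
    #{t ∈ triples l | t.1 = t.2.1 ∧ t.2.1 = t.2.2} = if l % 3 = 0 then 4 else 0 := by
  split_ifs with h3
  · have h : #{t ∈ triples l | t.1 = t.2.1 ∧ t.2.1 = t.2.2} = #(fiber (l / 3)) := by
      refine card_nbij' (fun t => t.1) (fun a => (a, a, a)) ?_ ?_ ?_ ?_
      · rintro ⟨a, b, c⟩ h
        simp only [coe_filter, Set.mem_ofPred_eq, mem_triples] at h
        simp only [mem_coe, mem_fiber]
        omega
      · intro a h
        simp only [mem_coe, mem_fiber] at h
        simp only [coe_filter, Set.mem_ofPred_eq, mem_triples, and_true]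
        omega
      · rintro ⟨a, b, c⟩ h
        simp only [coe_filter, Set.mem_ofPred_eq] at h
        simp [h.2]
      · intro a h
        rfl
    rw [h, card_fiber, mult, if_neg (by omega)]
  · rw [card_eq_zero, filter_eq_empty_iff]
    rintro ⟨a, b, c⟩ h
    rw [mem_triples] at h
    dsimp only
    omega

/-! ### Evaluation of the formula -/

/-- For `ℓ ≥ 1`, the number of multisets of cardinality 3 of elements of `W` whose weights
    sum to `ℓ` equals
    `24 + 64⌊((ℓ−3)²+6)/12⌋ + 20⌊(ℓ−1)/3⌋ + 58⌊(ℓ−1)/2⌋ − 20⌊ℓ/3⌋ + 30⌊ℓ/2⌋`. -/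
theorem statement17 (ℓ : ℕ) (hℓ : 1 ≤ ℓ) :
    (Nat.card {s : Multiset Wvar //
        Multiset.card s = 3 ∧ (s.map Wweight).sum = ℓ} : ℤ)
      = 24 + 64 * ⌊((((ℓ : ℚ) - 3) ^ 2 + 6) / 12)⌋ + 20 * ⌊(((ℓ : ℚ) - 1) / 3)⌋
        + 58 * ⌊(((ℓ : ℚ) - 1) / 2)⌋ - 20 * ⌊((ℓ : ℚ) / 3)⌋ + 30 * ⌊((ℓ : ℚ) / 2)⌋ := by
  have f1 : ⌊((((ℓ : ℚ) - 3) ^ 2 + 6) / 12)⌋ = (((ℓ : ℤ) - 3) ^ 2 + 6) / 12 := by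
    have := Rat.floor_intCast_div_natCast (((ℓ : ℤ) - 3) ^ 2 + 6) 12
    push_cast at this; exact this
  have f2 : ⌊(((ℓ : ℚ) - 1) / 3)⌋ = ((ℓ : ℤ) - 1) / 3 := by
    have := Rat.floor_intCast_div_natCast ((ℓ : ℤ) - 1) 3
    push_cast at this; exact this
  have f3 : ⌊(((ℓ : ℚ) - 1) / 2)⌋ = ((ℓ : ℤ) - 1) / 2 := by
    have := Rat.floor_intCast_div_natCast ((ℓ : ℤ) - 1) 2
    push_cast at this; exact this
  have f4 : ⌊((ℓ : ℚ) / 3)⌋ = (ℓ : ℤ) / 3 := by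
    have := Rat.floor_intCast_div_natCast (ℓ : ℤ) 3
    push_cast at this; exact this
  have f5 : ⌊((ℓ : ℚ) / 2)⌋ = (ℓ : ℤ) / 2 := by
    have := Rat.floor_intCast_div_natCast (ℓ : ℤ) 2
    push_cast at this; exact this
  rw [f1, f2, f3, f4, f5, card_multisets]
  have hB : (6 * #{t ∈ triples ℓ | t.1 ≤ t.2.1 ∧ t.2.1 ≤ t.2.2} : ℤ)
      = #(triples ℓ) + 3 * #{t ∈ triples ℓ | t.1 = t.2.1}
        + 2 * #{t ∈ triples ℓ | t.1 = t.2.1 ∧ t.2.1 = t.2.2} := by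
    exact_mod_cast burnside ℓ
  rw [card_all ℓ hℓ, card_diag ℓ hℓ, card_diag3 ℓ hℓ] at hB
  generalize #{t ∈ triples ℓ | t.1 ≤ t.2.1 ∧ t.2.1 ≤ t.2.2} = N at hB ⊢
  obtain ⟨q, r, hr, rfl⟩ : ∃ q r : ℕ, r < 6 ∧ ℓ = 6 * q + r :=
    ⟨ℓ / 6, ℓ % 6, by omega, by omega⟩
  -- After expanding the squares, `q ^ 2` is the only nonlinear monomial left.
  interval_cases r <;> push_cast at hB ⊢ <;> ring_nf at hB ⊢ <;>
    generalize (q : ℤ) ^ 2 = Q at hB ⊢ <;> split_ifs at hB <;> omega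
end
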